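/- For every integer ℓ < 0, the element q^{−1}·Tr(u^ℓ) is a Laurent polynomial in w supported in degrees between ℓ and ⌊ℓ/q⌋; that is, q^{−1}·Tr(u^ℓ) = ∑_{i=ℓ}^{⌊ℓ/q⌋} b_{ℓ,i}·w^i with b_{ℓ,i} ∈ L, and moreover v_π(b_{ℓ,i}) ≥ ⌊ℓ/q⌋ + 1 − i − v_π(q) for every i. In particular q^{−1}·Tr(u^ℓ) lies in w^{−1}·L[w^{−1}], i.e. it is supported in strictly negative degrees. -/

import Mathlib

/-!
Put `a = π`, so that `u ^ q + a * u = w`. Multiplying by `u ^ m` and taking traces gives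
`Tr (u ^ m) = w⁻¹ * (a * Tr (u ^ (m + 1)) + Tr (u ^ (m + q)))` for every integer `m`. In the basis
`1, u, …, u ^ (q - 1)` the diagonal of multiplication by `u ^ j`, `0 < j < q`, vanishes unless
`j = q - 1`, and this yields the initial values `Tr 1 = q` and `Tr u⁻¹ = a * w⁻¹`. Descending from
these, every `Tr (u ^ ℓ)` with `ℓ ≤ 0` is a Laurent polynomial in `w` that is built by multiplying
by `a * w⁻¹` and by `w⁻¹`. Multiplication by `w⁻¹` lowers `ℓ` by `q` and `⌊ℓ / q⌋` by one;
multiplication by `a * w⁻¹` lowers `ℓ` by one only, and the valuation of `a` compensates for the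
shift of coefficients.
-/

section LaurentPolynomial

open LaurentPolynomial

theorem laurentEval₂_eq_sum_of_support_subset {R S : Type*} [CommSemiring R] [CommSemiring S]
    (φ : R →+* S) (x : Sˣ) {f : R[T;T⁻¹]} {s : Finset ℤ} (hf : f.coeff.support ⊆ s) :
    eval₂ φ x f = ∑ i ∈ s, φ (f.coeff i) * ((x ^ i : Sˣ) : S) := by
  conv_lhs => rw [← AddMonoidAlgebra.sum_coeff_single f, Finsupp.sum_of_support_subset _ hf _
    fun _ _ ↦ AddMonoidAlgebra.single_zero _, map_sum]
  exact Finset.sum_congr rfl fun i _ ↦ by rw [single_eq_C_mul_T, eval₂_C_mul_T]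

theorem unit_mul_laurentEval₂_T_neg_one_mul {R S : Type*} [CommSemiring R] [CommSemiring S]
    (φ : R →+* S) (x : Sˣ) (f : R[T;T⁻¹]) :
    (x : S) * eval₂ φ x (T (-1) * f) = eval₂ φ x f := by
  rw [map_mul, eval₂_T, zpow_neg_one, Units.mul_inv_cancel_left]

theorem unit_mul_laurentEval₂_C_mul_T_neg_one_mul {R S : Type*} [CommSemiring R]
    [CommSemiring S] (φ : R →+* S) (x : Sˣ) (r : R) (f : R[T;T⁻¹]) :
    (x : S) * eval₂ φ x (C r * T (-1) * f) = φ r * eval₂ φ x f := by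
  rw [mul_assoc, mul_left_comm, unit_mul_laurentEval₂_T_neg_one_mul, map_mul, eval₂_C]

theorem coeff_T_mul {R : Type*} [Semiring R] (n i : ℤ) (f : R[T;T⁻¹]) :
    (T n * f).coeff i = f.coeff (i - n) := by
  rw [T, AddMonoidAlgebra.coeff_single_mul_apply, one_mul, sub_eq_neg_add]

/-- The Laurent polynomial `f` has the shape established for `Tr (u ^ ℓ)`, as a Laurent polynomial
in `w`: it is supported in degrees between `ℓ` and `⌊ℓ / q⌋`, and its `i`-th coefficient has
valuation at least `⌊ℓ / q⌋ + 1 - i`. The factor `q⁻¹` of the trace formula is left out, so that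
the condition is preserved by the steps of the trace recurrence. -/
structure HasTraceBound {L : Type*} [Semiring L] (v : L → EReal) (q : ℕ) (ℓ : ℤ)
    (f : L[T;T⁻¹]) : Prop where
  support_subset : f.coeff.support ⊆ Finset.Icc ℓ (ℓ / q)
  le_coeff (i : ℤ) : ((((ℓ / (q : ℤ) : ℤ) : ℝ) + 1 - (i : ℝ) : ℝ) : EReal) ≤ v (f.coeff i)

section HasTraceBound

variable {L : Type*} [CommSemiring L] {v : L → EReal} {q : ℕ} {ℓ : ℤ} {f g : L[T;T⁻¹]}

theorem hasTraceBound_C (hv0 : v 0 = ⊤) {x : L} (hx : 1 ≤ v x) : HasTraceBound v q 0 (C x) where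
  support_subset i := by simp +contextual
  le_coeff i := by
    rcases eq_or_ne i 0 with rfl | hi
    · simpa using hx
    · simp [hi, hv0]

theorem hasTraceBound_C_mul_T_neg_one (hv0 : v 0 = ⊤) (hq : q ≠ 0) {a : L} (ha : 1 ≤ v a) :
    HasTraceBound v q (-1) (C a * T (-1)) := by
  have hfloor : (-1 : ℤ) / q = -1 := by
    rw [Int.neg_one_ediv, Int.sign_eq_one_of_pos (by omega)]
  constructor
  · simpa [hfloor] using support_C_mul_T a (-1)
  · intro i
    rw [← single_eq_C_mul_T, AddMonoidAlgebra.coeff_single, hfloor]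
    rcases eq_or_ne i (-1) with rfl | hi
    · simpa using ha
    · simp [hi.symm, hv0]

namespace HasTraceBound

theorem add (hvadd : ∀ x y : L, min (v x) (v y) ≤ v (x + y))
    (hf : HasTraceBound v q ℓ f) (hg : HasTraceBound v q ℓ g) : HasTraceBound v q ℓ (f + g) where
  support_subset := Finsupp.support_add.trans
    (Finset.union_subset hf.support_subset hg.support_subset)
  le_coeff i := (le_min (hf.le_coeff i) (hg.le_coeff i)).trans (hvadd _ _)

theorem C_mul_T_neg_one_mul (hvmul : ∀ x y : L, v (x * y) = v x + v y) (hq : q ≠ 0)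
    {a : L} (ha : 1 ≤ v a) (hf : HasTraceBound v q ℓ f) :
    HasTraceBound v q (ℓ - 1) (C a * T (-1) * f) := by
  have hcoeff (i : ℤ) : (C a * T (-1) * f).coeff i = a * f.coeff (i + 1) := by
    rw [mul_assoc, ← smul_eq_C_mul, AddMonoidAlgebra.coeff_smul, Finsupp.smul_apply, coeff_T_mul,
      smul_eq_mul, sub_neg_eq_add]
  have hfloor : (ℓ - 1) / q ≤ ℓ / q := Int.ediv_le_ediv (by omega) (by omega)
  have hfloor' : ℓ / q - 1 ≤ (ℓ - 1) / q := by
    rw [← Int.sub_mul_ediv_right _ _ (by omega)]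
    exact Int.ediv_le_ediv (by omega) (by omega)
  constructor
  · intro i hi
    have hi : i + 1 ∈ Finset.Icc ℓ (ℓ / q) := hf.support_subset <| Finsupp.mem_support_iff.2
      (right_ne_zero_of_mul <| hcoeff i ▸ Finsupp.mem_support_iff.1 hi)
    rw [Finset.mem_Icc] at hi ⊢
    omega
  · intro i
    rw [hcoeff, hvmul]
    refine le_trans ?_ (add_le_add ha (hf.le_coeff (i + 1)))
    rw [← EReal.coe_one, ← EReal.coe_add, EReal.coe_le_coe_iff]
    have := Int.cast_le (R := ℝ).2 hfloor
    push_cast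
    linarith

theorem T_neg_one_mul (hq : q ≠ 0) (hf : HasTraceBound v q ℓ f) :
    HasTraceBound v q (ℓ - q) (T (-1) * f) := by
  have hfloor : (ℓ - q) / q = ℓ / q - 1 := by
    simpa using Int.sub_mul_ediv_right ℓ 1 (c := q) (by omega)
  constructor
  · intro i hi
    rw [Finsupp.mem_support_iff, coeff_T_mul] at hi
    have hi := Finset.mem_Icc.1 (hf.support_subset (Finsupp.mem_support_iff.2 hi))
    rw [Finset.mem_Icc]
    omega
  · intro i
    rw [coeff_T_mul]
    refine le_trans (le_of_eq ?_) (hf.le_coeff _)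
    rw [hfloor]
    norm_num

end HasTraceBound

end HasTraceBound

end LaurentPolynomial

section Trace

variable {K S : Type*} [CommRing K]

theorem trace_zpow_recurrence [Field S] [Algebra K S] {u : S} (hu0 : u ≠ 0) {q : ℕ} {a c : K}
    (hu : u ^ q + algebraMap K S a * u = algebraMap K S c) (m : ℤ) :
    Algebra.trace K S (u ^ (m + q)) + a * Algebra.trace K S (u ^ (m + 1)) =
      c * Algebra.trace K S (u ^ m) := by
  have hmul : u ^ (m + q) + a • u ^ (m + 1) = c • u ^ m := by
    rw [Algebra.smul_def, Algebra.smul_def, ← hu, zpow_add₀ hu0, zpow_add_one₀ hu0, zpow_natCast]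
    ring
  simpa using congrArg (Algebra.trace K S) hmul

variable [CommRing S] [Algebra K S] (pb : PowerBasis K S) {a c : K}

theorem repr_gen_pow_add
    (hgen : pb.gen ^ pb.dim + algebraMap K S a * pb.gen = algebraMap K S c)
    {j : ℕ} (hj0 : 0 < j) (hj : j < pb.dim) (i : Fin pb.dim) :
    pb.basis.repr (pb.gen ^ (j + i : ℕ)) i = if j + 1 = pb.dim ∧ (i : ℕ) ≠ 0 then -a else 0 := by
  obtain hlt | hge := lt_or_ge (j + i : ℕ) pb.dim
  · rw [← Fin.val_mk hlt, ← pb.basis_eq_pow, pb.basis.repr_self, Finsupp.single_apply]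
    grind
  · obtain ⟨k, hk⟩ := Nat.exists_eq_add_of_le' hge
    have hreduce : pb.gen ^ (j + i : ℕ) =
        c • pb.basis ⟨k, by omega⟩ - a • pb.basis ⟨k + 1, by omega⟩ := by
      rw [hk, pow_add, eq_sub_of_add_eq hgen, pb.basis_eq_pow, pb.basis_eq_pow, Algebra.smul_def,
        Algebra.smul_def]
      ring
    rw [hreduce, map_sub, map_smul, map_smul, pb.basis.repr_self, pb.basis.repr_self]
    simp only [Finsupp.sub_apply, Finsupp.smul_apply, Finsupp.single_apply, smul_eq_mul]
    grind

theorem trace_gen_pow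
    (hgen : pb.gen ^ pb.dim + algebraMap K S a * pb.gen = algebraMap K S c)
    {j : ℕ} (hj0 : 0 < j) (hj : j < pb.dim) :
    Algebra.trace K S (pb.gen ^ j) = if j + 1 = pb.dim then -((pb.dim - 1 : ℕ) : K) * a else 0 := by
  have hdiag (i : Fin pb.dim) : (Algebra.leftMulMatrix pb.basis (pb.gen ^ j)).diag i =
      if j + 1 = pb.dim ∧ (i : ℕ) ≠ 0 then -a else 0 := by
    rw [Matrix.diag_apply, Algebra.leftMulMatrix_eq_repr_mul, pb.basis_eq_pow, ← pow_add,
      repr_gen_pow_add pb hgen hj0 hj]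
  rw [Algebra.trace_eq_matrix_trace pb.basis, Matrix.trace, Finset.sum_congr rfl fun i _ ↦ hdiag i]
  split_ifs with h
  · obtain ⟨m, hm⟩ := Nat.exists_eq_succ_of_ne_zero (hj0.trans hj).ne'
    simp only [h, true_and]
    rw [Fin.sum_univ_eq_sum_range (fun i ↦ if i ≠ 0 then -a else 0), hm, Finset.sum_range_succ']
    simp
  · simp [h]

theorem trace_gen_zpow_neg_one {S : Type*} [Field S] [Algebra K S] (pb : PowerBasis K S)
    (hdim : 2 ≤ pb.dim) (hgen0 : pb.gen ≠ 0)
    (hgen : pb.gen ^ pb.dim + algebraMap K S a * pb.gen = algebraMap K S c) :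
    c * Algebra.trace K S (pb.gen ^ (-1 : ℤ)) = a := by
  have htop : Algebra.trace K S (pb.gen ^ (-1 + pb.dim : ℤ)) = -((pb.dim - 1 : ℕ) : K) * a := by
    rw [show (-1 + pb.dim : ℤ) = (pb.dim - 1 : ℕ) by omega, zpow_natCast,
      trace_gen_pow pb hgen (by omega) (by omega), if_pos (by omega)]
  have hone : Algebra.trace K S (pb.gen ^ (-1 + 1 : ℤ)) = pb.dim := by
    simpa using Algebra.trace_algebraMap_of_basis pb.basis (1 : K)
  rw [← trace_zpow_recurrence hgen0 hgen, htop, hone, Nat.cast_pred (by omega)]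
  ring

theorem trace_gen_zpow_neg_of_lt_dim {S : Type*} [Field S] [Algebra K S] (pb : PowerBasis K S)
    (hgen0 : pb.gen ≠ 0)
    (hgen : pb.gen ^ pb.dim + algebraMap K S a * pb.gen = algebraMap K S c)
    {n : ℕ} (hn : 2 ≤ n) (hlt : n < pb.dim) :
    c * Algebra.trace K S (pb.gen ^ (-n : ℤ)) =
      a * Algebra.trace K S (pb.gen ^ (-n + 1 : ℤ)) := by
  have hzero : Algebra.trace K S (pb.gen ^ (-n + pb.dim : ℤ)) = 0 := by
    rw [show (-n + pb.dim : ℤ) = (pb.dim - n : ℕ) by omega, zpow_natCast,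
      trace_gen_pow pb hgen (by omega) (by omega), if_neg (by omega)]
  rw [← trace_zpow_recurrence hgen0 hgen, hzero, zero_add]

open LaurentPolynomial in
theorem exists_hasTraceBound_trace_zpow_neg {L K S : Type*} [CommSemiring L] [CommRing K] [Field S]
    [Algebra L K] [Algebra K S] (pb : PowerBasis K S) (hdim : 2 ≤ pb.dim) (hgen0 : pb.gen ≠ 0)
    {a : L} {c : Kˣ}
    (hgen : pb.gen ^ pb.dim + algebraMap K S (algebraMap L K a) * pb.gen = algebraMap K S c)
    {v : L → EReal} (hv0 : v 0 = ⊤) (hvmul : ∀ x y : L, v (x * y) = v x + v y)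
    (hvadd : ∀ x y : L, min (v x) (v y) ≤ v (x + y)) (ha : 1 ≤ v a) (hvdim : 1 ≤ v pb.dim)
    (n : ℕ) :
    ∃ f : L[T;T⁻¹], HasTraceBound v pb.dim (-n) f ∧
      Algebra.trace K S (pb.gen ^ (-n : ℤ)) = eval₂ (algebraMap L K) c f := by
  have hdim0 : pb.dim ≠ 0 := by omega
  induction n using Nat.strong_induction_on with
  | _ n ih =>
  obtain rfl | rfl | hn : n = 0 ∨ n = 1 ∨ 2 ≤ n := by omega
  · refine ⟨C pb.dim, hasTraceBound_C hv0 hvdim, ?_⟩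
    simpa using Algebra.trace_algebraMap_of_basis pb.basis (1 : K)
  · refine ⟨C a * T (-1), hasTraceBound_C_mul_T_neg_one hv0 hdim0 ha, c.mul_right_inj.1 ?_⟩
    rw [eval₂_C_mul_T, Nat.cast_one, trace_gen_zpow_neg_one pb hdim hgen0 hgen, zpow_neg_one,
      mul_left_comm, Units.mul_inv, mul_one]
  obtain ⟨f, hf, htf⟩ := ih (n - 1) (by omega)
  have hsucc : -((n - 1 : ℕ) : ℤ) = -n + 1 := by omega
  rw [hsucc] at hf htf
  have haf : HasTraceBound v pb.dim (-n) (C a * T (-1) * f) := by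
    simpa using hf.C_mul_T_neg_one_mul hvmul hdim0 ha
  obtain hlt | hle := lt_or_ge n pb.dim
  · refine ⟨_, haf, c.mul_right_inj.1 ?_⟩
    rw [trace_gen_zpow_neg_of_lt_dim pb hgen0 hgen hn hlt, htf,
      unit_mul_laurentEval₂_C_mul_T_neg_one_mul]
  · obtain ⟨g, hg, htg⟩ := ih (n - pb.dim) (by omega)
    have hshift : -((n - pb.dim : ℕ) : ℤ) = -n + pb.dim := by omega
    rw [hshift] at hg htg
    have hTg : HasTraceBound v pb.dim (-n) (T (-1) * g) := by
      simpa using hg.T_neg_one_mul hdim0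
    refine ⟨_, haf.add hvadd hTg, c.mul_right_inj.1 ?_⟩
    rw [← trace_zpow_recurrence hgen0 hgen, htf, htg, map_add, mul_add,
      unit_mul_laurentEval₂_C_mul_T_neg_one_mul, unit_mul_laurentEval₂_T_neg_one_mul, add_comm]

end Trace

section RatFunc

open scoped Polynomial

variable {L : Type*} [Field L]

theorem exists_powerBasis_gen_eq_X (E : IntermediateField L (RatFunc L))
    [FiniteDimensional E (RatFunc L)] :
    ∃ pb : PowerBasis E (RatFunc L), pb.gen = RatFunc.X := by
  refine ⟨(IntermediateField.adjoin.powerBasis (IsIntegral.of_finite E RatFunc.X)).map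
    (RatFunc.IntermediateField.adjoinXEquiv E), ?_⟩
  rw [PowerBasis.map_gen, IntermediateField.adjoin.powerBasis_gen]
  rfl

theorem finrank_adjoin_algebraMap (p : L[X]) :
    Module.finrank (IntermediateField.adjoin L {algebraMap L[X] (RatFunc L) p}) (RatFunc L) =
      p.natDegree := by
  simp [RatFunc.finrank_eq_max_natDegree]

theorem finrank_adjoin_X_pow_add_C_mul_X {q : ℕ} (hq : 2 ≤ q) (a : L) :
    Module.finrank (IntermediateField.adjoin L
      {(RatFunc.X ^ q + RatFunc.C a * RatFunc.X : RatFunc L)}) (RatFunc L) = q := by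
  have hp : (RatFunc.X ^ q + RatFunc.C a * RatFunc.X : RatFunc L) =
      algebraMap L[X] (RatFunc L) (Polynomial.X ^ q + Polynomial.C a * Polynomial.X) := by simp
  have hlt : (Polynomial.C a * Polynomial.X).natDegree < (Polynomial.X ^ q : L[X]).natDegree := by
    rw [Polynomial.natDegree_X_pow]
    exact ((Polynomial.natDegree_C_mul_le a _).trans Polynomial.natDegree_X_le).trans_lt hq
  rw [hp, finrank_adjoin_algebraMap, Polynomial.natDegree_add_eq_left_of_natDegree_lt hlt,
    Polynomial.natDegree_X_pow]

theorem finrank_adjoin_zero :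
    Module.finrank (IntermediateField.adjoin L {(0 : RatFunc L)}) (RatFunc L) = 0 := by
  simp [RatFunc.finrank_eq_max_natDegree]

end RatFunc

theorem map_inv_eq_neg {L : Type*} [GroupWithZero L] {v : L → EReal}
    (hv1 : v 1 = 0) (hvmul : ∀ x y : L, v (x * y) = v x + v y) {x : L} (hx : x ≠ 0) :
    v x⁻¹ = -v x := by
  have hsum : v x + v x⁻¹ = 0 := by rw [← hvmul, mul_inv_cancel₀ hx, hv1]
  induction hvx : v x <;> induction hvy : v x⁻¹ <;> simp_all
  norm_cast at *
  linarith

theorem stmt_5_general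
    (L : Type*) [Field L] [CharZero L]
    (v : L → EReal)
    (hv0 : v 0 = ⊤) (hv1 : v 1 = 0)
    (hvmul : ∀ x y : L, v (x * y) = v x + v y)
    (hvadd : ∀ x y : L, min (v x) (v y) ≤ v (x + y))
    (q : ℕ) (hq : 2 ≤ q) (a : L) (ha : 1 ≤ v a)
    (hvq : (1 : EReal) ≤ v ((q : L)))
    (w : RatFunc L) (hw : w = RatFunc.X ^ q + RatFunc.C a * RatFunc.X)
    (ℓ : ℤ) (hℓ : ℓ ≤ 0) :
    ∃ b : ℤ → L,
      ((q : RatFunc L))⁻¹ *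
          ((Algebra.trace (IntermediateField.adjoin L {w}) (RatFunc L)
              ((RatFunc.X : RatFunc L) ^ ℓ) : IntermediateField.adjoin L {w}) : RatFunc L)
        = ∑ i ∈ Finset.Icc ℓ (ℓ / (q : ℤ)), RatFunc.C (b i) * w ^ i ∧
      ∀ i ∈ Finset.Icc ℓ (ℓ / (q : ℤ)),
        ((((ℓ / (q : ℤ) : ℤ) : ℝ) + 1 - (i : ℝ) : ℝ) : EReal) - v ((q : L)) ≤ v (b i) := by
  have hfinrank : Module.finrank (IntermediateField.adjoin L {w}) (RatFunc L) = q :=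
    hw ▸ finrank_adjoin_X_pow_add_C_mul_X hq a
  have hw0 : w ≠ 0 := by
    rintro rfl
    exact absurd hfinrank (by rw [finrank_adjoin_zero]; omega)
  have : FiniteDimensional (IntermediateField.adjoin L {w}) (RatFunc L) :=
    .of_finrank_pos (by omega)
  obtain ⟨pb, hgen⟩ := exists_powerBasis_gen_eq_X (IntermediateField.adjoin L {w})
  obtain rfl : pb.dim = q := pb.finrank.symm.trans hfinrank
  let c : (IntermediateField.adjoin L {w})ˣ := .mk0
    ⟨w, IntermediateField.mem_adjoin_simple_self L w⟩ (by simpa [Subtype.ext_iff] using hw0)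
  obtain ⟨n, rfl⟩ := Int.exists_eq_neg_ofNat hℓ
  obtain ⟨f, hf, htr⟩ := exists_hasTraceBound_trace_zpow_neg pb hq (hgen ▸ RatFunc.X_ne_zero)
    (c := c) (by rw [hgen]; exact hw.symm) hv0 hvmul hvadd ha hvq n
  refine ⟨fun i ↦ (pb.dim : L)⁻¹ * f.coeff i, ?_, fun i _ ↦ ?_⟩
  · rw [← hgen, htr, laurentEval₂_eq_sum_of_support_subset _ _ hf.support_subset]
    push_cast
    rw [Finset.mul_sum]
    refine Finset.sum_congr rfl fun i _ ↦ ?_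
    rw [map_mul, map_inv₀, map_natCast, mul_assoc]
    rfl
  · rw [hvmul, map_inv_eq_neg hv1 hvmul (Nat.cast_ne_zero.2 (by omega)), sub_eq_add_neg, add_comm]
    exact add_le_add_right (hf.le_coeff i) _


/-- Same setting as Statement 4 (`w = u^q + π u` in `L(u)`, `Tr` the trace of
`L(w) ⊆ L(u)`, `vπ` normalized by `vπ π = 1`, `vπ q ≥ 1`).  For every integer `ℓ < 0`,
`q⁻¹ Tr(u^ℓ)` is a Laurent polynomial in `w` supported in degrees between `ℓ` and `⌊ℓ/q⌋`:
`q⁻¹ Tr(u^ℓ) = ∑_{i=ℓ}^{⌊ℓ/q⌋} b i * w^i` with `vπ (b i) ≥ ⌊ℓ/q⌋ + 1 - i - vπ q`.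
In particular `⌊ℓ/q⌋ < 0`, i.e. `q⁻¹ Tr(u^ℓ)` is supported in strictly negative degrees. -/
theorem stmt_5
    (L : Type*) [Field L] [CharZero L]
    (vπ : L → EReal)
    (hv0 : vπ 0 = ⊤) (hv1 : vπ 1 = 0)
    (hvmul : ∀ x y : L, vπ (x * y) = vπ x + vπ y)
    (hvadd : ∀ x y : L, min (vπ x) (vπ y) ≤ vπ (x + y))
    (q : ℕ) (hq : 2 ≤ q) (π : L) (hπ : vπ π = 1)
    (hvq : (1 : EReal) ≤ vπ ((q : L)))
    (w : RatFunc L) (hw : w = RatFunc.X ^ q + RatFunc.C π * RatFunc.X)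
    (ℓ : ℤ) (hℓ : ℓ < 0) :
    (ℓ / (q : ℤ) < 0) ∧
    ∃ b : ℤ → L,
      ((q : RatFunc L))⁻¹ *
          ((Algebra.trace (IntermediateField.adjoin L {w}) (RatFunc L)
              ((RatFunc.X : RatFunc L) ^ ℓ) : IntermediateField.adjoin L {w}) : RatFunc L)
        = ∑ i ∈ Finset.Icc ℓ (ℓ / (q : ℤ)), RatFunc.C (b i) * w ^ i ∧
      ∀ i ∈ Finset.Icc ℓ (ℓ / (q : ℤ)),
        ((((ℓ / (q : ℤ) : ℤ) : ℝ) + 1 - (i : ℝ) : ℝ) : EReal) - vπ ((q : L)) ≤ vπ (b i) :=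
  ⟨Int.ediv_neg_of_neg_of_pos hℓ (by omega),
    stmt_5_general L vπ hv0 hv1 hvmul hvadd q hq π hπ.ge hvq w hw ℓ hℓ.le⟩
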